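/- For every solution of the backward Ricci flow system of class U3S1, case (i), with A(0) ≥ B(0): A(t) ≥ B(t) for all t ∈ [0,T); and if moreover C(t₁) ≥ A(t₁) for some t₁ ∈ [0,T), then C(t) − A(t) ≥ C(t₁) − A(t₁) + 4(t − t₁) for all t ∈ [t₁,T); in particular the condition C ≥ A is preserved forward in time. -/

import Mathlib

open Real Set ENNReal

/-- The time domain `[0, T)` where `T ∈ (0, ∞]` is an extended nonnegative real. -/
def flowDomain (T : ℝ≥0∞) : Set ℝ := {t : ℝ | 0 ≤ t ∧ ENNReal.ofReal t < T}

/-!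
Both differences satisfy linear equations with the same shape of coefficient,
`q x y z = ((x + y)² - z²) / (x y z)`:
`(A - B)' = q A B C * (A - B)` and `(C - A)' = q A C B * (C - A) + 4`.
Multiplying by the integrating factor `exp (-∫ q)` shows that `A - B ≥ 0` and `C - A ≥ 0` persist.
Once `B ≤ A ≤ C`, also `q A C B ≥ 0`, so `C - A` grows at rate at least `4`.
-/

section LinearComparison

lemma exists_hasDerivAt_of_continuousOn_Icc {E : Type*} [NormedAddCommGroup E] [NormedSpace ℝ E]
    [CompleteSpace E] {g : ℝ → E} {a b : ℝ} (hab : a ≤ b) (hg : ContinuousOn g (Icc a b)) :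
    ∃ G : ℝ → E, ∀ t ∈ Icc a b, HasDerivAt G (g t) t := by
  have hcont : Continuous (IccExtend hab ((Icc a b).domRestrict g)) := hg.domRestrict.Icc_extend'
  refine ⟨fun t => ∫ x in a..t, IccExtend hab ((Icc a b).domRestrict g) x, fun t ht => ?_⟩
  exact (hcont.integral_hasStrictDerivAt a t).hasDerivAt.congr_deriv (IccExtend_of_mem hab _ ht)

variable {u u' g : ℝ → ℝ} {s : Set ℝ}

lemma monotoneOn_mul_exp_neg_of_mul_le_deriv {G : ℝ → ℝ} (hs : Convex ℝ s)
    (hu : ∀ t ∈ s, HasDerivWithinAt u (u' t) s t) (hG : ∀ t ∈ s, HasDerivWithinAt G (g t) s t)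
    (hle : ∀ t ∈ s, g t * u t ≤ u' t) :
    MonotoneOn (fun t => u t * exp (-G t)) s := by
  have hderiv : ∀ t ∈ s, HasDerivWithinAt (fun t => u t * exp (-G t))
      ((u' t - g t * u t) * exp (-G t)) s t := fun t ht =>
    ((hu t ht).mul (hG t ht).fun_neg.exp).congr_deriv (by ring)
  refine monotoneOn_of_hasDerivWithinAt_nonneg hs
    (fun t ht => (hderiv t ht).continuousWithinAt)
    (fun t ht => (hderiv t (interior_subset ht)).mono interior_subset) fun t ht => ?_
  exact mul_nonneg (sub_nonneg.2 (hle t (interior_subset ht))) (exp_pos _).le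

lemma nonneg_of_mul_le_deriv (hs : s.OrdConnected)
    (hu : ∀ t ∈ s, HasDerivWithinAt u (u' t) s t) (hg : ContinuousOn g s)
    (hle : ∀ t ∈ s, g t * u t ≤ u' t) {a b : ℝ} (ha : a ∈ s) (hb : b ∈ s) (hab : a ≤ b)
    (hua : 0 ≤ u a) : 0 ≤ u b := by
  have hsub : Icc a b ⊆ s := hs.out ha hb
  obtain ⟨G, hG⟩ := exists_hasDerivAt_of_continuousOn_Icc hab (hg.mono hsub)
  have hmono : u a * exp (-G a) ≤ u b * exp (-G b) :=
    monotoneOn_mul_exp_neg_of_mul_le_deriv (convex_Icc a b)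
      (fun t ht => (hu t (hsub ht)).mono hsub) (fun t ht => (hG t ht).hasDerivWithinAt)
      (fun t ht => hle t (hsub ht)) (left_mem_Icc.2 hab) (right_mem_Icc.2 hab) hab
  have hfactor : 0 ≤ u b * exp (-G b) := (mul_nonneg hua (exp_pos _).le).trans hmono
  exact nonneg_of_mul_nonneg_left hfactor (exp_pos _)

end LinearComparison

/-- The coefficient of the linear equations satisfied by the differences `A - B` (with `x = A`,
`y = B`, `z = C`) and `C - A` (with `x = A`, `y = C`, `z = B`) along the flow. -/
noncomputable def gapRate (x y z : ℝ) : ℝ := ((x + y) ^ 2 - z ^ 2) / (x * y * z)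

lemma gapRate_nonneg {x y z : ℝ} (hx : 0 ≤ x) (hy : 0 ≤ y) (hz : 0 ≤ z) (h : z ≤ x + y) :
    0 ≤ gapRate x y z :=
  div_nonneg (sub_nonneg.2 (pow_le_pow_left₀ hz h 2)) (by positivity)

lemma continuousOn_gapRate {X : Type*} [TopologicalSpace X] {f g h : X → ℝ} {s : Set X}
    (hf : ContinuousOn f s) (hg : ContinuousOn g s) (hh : ContinuousOn h s)
    (hne : ∀ t ∈ s, f t * g t * h t ≠ 0) :
    ContinuousOn (fun t => gapRate (f t) (g t) (h t)) s :=
  (((hf.add hg).pow 2).sub (hh.pow 2)).div ((hf.mul hg).mul hh) hne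

/-- Positive solutions on the time set `s` of the backward Ricci flow system of class `U3S1`,
case (i). Derivatives are taken within `s`, so they are one-sided at an endpoint of `s`. -/
structure IsU3S1Flow (A B C : ℝ → ℝ) (s : Set ℝ) : Prop where
  pos : ∀ t ∈ s, 0 < A t ∧ 0 < B t ∧ 0 < C t
  hasDerivWithinAt_A : ∀ t ∈ s,
    HasDerivWithinAt A ((A t ^ 2 - (B t + C t) ^ 2) / (B t * C t)) s t
  hasDerivWithinAt_B : ∀ t ∈ s,
    HasDerivWithinAt B ((B t ^ 2 - (A t + C t) ^ 2) / (A t * C t)) s t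
  hasDerivWithinAt_C : ∀ t ∈ s,
    HasDerivWithinAt C ((C t ^ 2 - (A t - B t) ^ 2) / (A t * B t)) s t

namespace IsU3S1Flow

variable {A B C : ℝ → ℝ} {s : Set ℝ} {a b t : ℝ}

lemma continuousOn_A (h : IsU3S1Flow A B C s) : ContinuousOn A s :=
  fun t ht => (h.hasDerivWithinAt_A t ht).continuousWithinAt

lemma continuousOn_B (h : IsU3S1Flow A B C s) : ContinuousOn B s :=
  fun t ht => (h.hasDerivWithinAt_B t ht).continuousWithinAt

lemma continuousOn_C (h : IsU3S1Flow A B C s) : ContinuousOn C s :=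
  fun t ht => (h.hasDerivWithinAt_C t ht).continuousWithinAt

lemma hasDerivWithinAt_A_sub_B (h : IsU3S1Flow A B C s) (ht : t ∈ s) :
    HasDerivWithinAt (fun t => A t - B t) (gapRate (A t) (B t) (C t) * (A t - B t)) s t := by
  obtain ⟨hA, hB, hC⟩ := h.pos t ht
  refine ((h.hasDerivWithinAt_A t ht).sub (h.hasDerivWithinAt_B t ht)).congr_deriv ?_
  rw [gapRate]
  field_simp
  ring

lemma hasDerivWithinAt_C_sub_A (h : IsU3S1Flow A B C s) (ht : t ∈ s) :
    HasDerivWithinAt (fun t => C t - A t) (gapRate (A t) (C t) (B t) * (C t - A t) + 4) s t := by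
  obtain ⟨hA, hB, hC⟩ := h.pos t ht
  refine ((h.hasDerivWithinAt_C t ht).sub (h.hasDerivWithinAt_A t ht)).congr_deriv ?_
  rw [gapRate]
  field_simp
  ring

lemma B_le_A (h : IsU3S1Flow A B C s) (hs : s.OrdConnected) (ha : a ∈ s) (hb : b ∈ s)
    (hab : a ≤ b) (hBA : B a ≤ A a) : B b ≤ A b := by
  have hrate : ContinuousOn (fun t => gapRate (A t) (B t) (C t)) s :=
    continuousOn_gapRate h.continuousOn_A h.continuousOn_B h.continuousOn_C fun t ht => by
      obtain ⟨hA, hB, hC⟩ := h.pos t ht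
      positivity
  exact sub_nonneg.1 <| nonneg_of_mul_le_deriv hs (fun t => h.hasDerivWithinAt_A_sub_B) hrate
    (fun _ _ => le_rfl) ha hb hab (sub_nonneg.2 hBA)

lemma A_le_C (h : IsU3S1Flow A B C s) (hs : s.OrdConnected) (ha : a ∈ s) (hb : b ∈ s)
    (hab : a ≤ b) (hAC : A a ≤ C a) : A b ≤ C b := by
  have hrate : ContinuousOn (fun t => gapRate (A t) (C t) (B t)) s :=
    continuousOn_gapRate h.continuousOn_A h.continuousOn_C h.continuousOn_B fun t ht => by
      obtain ⟨hA, hB, hC⟩ := h.pos t ht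
      positivity
  exact sub_nonneg.1 <| nonneg_of_mul_le_deriv hs (fun t => h.hasDerivWithinAt_C_sub_A) hrate
    (fun _ _ => le_add_of_nonneg_right zero_le_four) ha hb hab (sub_nonneg.2 hAC)

lemma four_le_deriv_C_sub_A (h : IsU3S1Flow A B C s) (ht : s ∈ nhds t) (hBA : B t ≤ A t)
    (hAC : A t ≤ C t) : 4 ≤ deriv (fun t => C t - A t) t := by
  have hts : t ∈ s := mem_of_mem_nhds ht
  obtain ⟨hA, hB, hC⟩ := h.pos t hts
  rw [((h.hasDerivWithinAt_C_sub_A hts).hasDerivAt ht).deriv]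
  have hrate : 0 ≤ gapRate (A t) (C t) (B t) :=
    gapRate_nonneg hA.le hC.le hB.le (hBA.trans (le_add_of_nonneg_right hC.le))
  exact le_add_of_nonneg_left (mul_nonneg hrate (sub_nonneg.2 hAC))

lemma C_sub_A_add_four_mul_le (h : IsU3S1Flow A B C s) (hs : s.OrdConnected) (ha : a ∈ s)
    (hb : b ∈ s) (hab : a ≤ b) (hBA : B a ≤ A a) (hAC : A a ≤ C a) :
    C a - A a + 4 * (b - a) ≤ C b - A b := by
  have hsub : Icc a b ⊆ s := hs.out ha hb
  have hnhds : ∀ t ∈ interior (Icc a b), s ∈ nhds t := fun t ht =>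
    Filter.mem_of_superset (mem_interior_iff_mem_nhds.1 ht) hsub
  have hgrowth : 4 * (b - a) ≤ (C b - A b) - (C a - A a) := by
    refine (convex_Icc a b).mul_sub_le_image_sub_of_le_deriv
      ((h.continuousOn_C.sub h.continuousOn_A).mono hsub) (fun t ht => ?_) (fun t ht => ?_)
      a (left_mem_Icc.2 hab) b (right_mem_Icc.2 hab) hab
    · exact ((h.hasDerivWithinAt_C_sub_A (hsub (interior_subset ht))).hasDerivAt
        (hnhds t ht)).differentiableAt.differentiableWithinAt
    · obtain ⟨hat, htb⟩ := interior_subset ht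
      have hts : t ∈ s := hsub ⟨hat, htb⟩
      exact h.four_le_deriv_C_sub_A (hnhds t ht) (h.B_le_A hs ha hts hat hBA)
        (h.A_le_C hs ha hts hat hAC)
  linarith

end IsU3S1Flow

lemma ordConnected_flowDomain (T : ℝ≥0∞) : (flowDomain T).OrdConnected :=
  ⟨fun _ ha _ hb _ ht => ⟨ha.1.trans ht.1, (ENNReal.ofReal_le_ofReal ht.2).trans_lt hb.2⟩⟩

lemma zero_mem_flowDomain {T : ℝ≥0∞} (hT : 0 < T) : (0 : ℝ) ∈ flowDomain T :=
  ⟨le_rfl, by rwa [ENNReal.ofReal_zero]⟩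

/-- For every solution of the backward Ricci flow system of class `U3S1`, case (i), with
`A(0) ≥ B(0)`: one has `A(t) ≥ B(t)` on `[0,T)`; and if moreover `C(t₁) ≥ A(t₁)` for some
`t₁ ∈ [0,T)`, then `C(t) − A(t) ≥ C(t₁) − A(t₁) + 4(t − t₁)` for all `t ∈ [t₁,T)`; in
particular the condition `C ≥ A` is preserved forward in time. -/
theorem stmt14 (T : ℝ≥0∞) (hT : 0 < T)
    (lam1 lam2 lam3 : ℝ)
    (hlam2 : 0 < lam2) (hlam3 : 0 < lam3) (hge : lam2 ≤ lam1)
    (A B C : ℝ → ℝ)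
    (hpos : ∀ t ∈ flowDomain T, 0 < A t ∧ 0 < B t ∧ 0 < C t)
    (hA : ∀ t ∈ flowDomain T,
      HasDerivWithinAt A ((A t ^ 2 - (B t + C t) ^ 2) / (B t * C t)) (flowDomain T) t)
    (hB : ∀ t ∈ flowDomain T,
      HasDerivWithinAt B ((B t ^ 2 - (A t + C t) ^ 2) / (A t * C t)) (flowDomain T) t)
    (hC : ∀ t ∈ flowDomain T,
      HasDerivWithinAt C ((C t ^ 2 - (A t - B t) ^ 2) / (A t * B t)) (flowDomain T) t)
    (hA0 : A 0 = lam1) (hB0 : B 0 = lam2) (hC0 : C 0 = lam3) :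
    (∀ t ∈ flowDomain T, B t ≤ A t) ∧
    (∀ t₁ ∈ flowDomain T, A t₁ ≤ C t₁ →
      ∀ t ∈ flowDomain T, t₁ ≤ t →
        C t₁ - A t₁ + 4 * (t - t₁) ≤ C t - A t ∧ A t ≤ C t) := by
  have hflow : IsU3S1Flow A B C (flowDomain T) := ⟨hpos, hA, hB, hC⟩
  have hconn : (flowDomain T).OrdConnected := ordConnected_flowDomain T
  have hBA : ∀ t ∈ flowDomain T, B t ≤ A t := fun t ht =>
    hflow.B_le_A hconn (zero_mem_flowDomain hT) ht ht.1 (by rwa [hA0, hB0])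
  exact ⟨hBA, fun t₁ ht₁ hAC t ht hle =>
    ⟨hflow.C_sub_A_add_four_mul_le hconn ht₁ ht hle (hBA t₁ ht₁) hAC,
      hflow.A_le_C hconn ht₁ ht hle hAC⟩⟩
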